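/- Consider the third-order curl-preserving reconstruction of the previous form: V^x(x,y) = [V_x^1 + Δ_xV_x^1·x + Δ_xxV_x^1·(x² − 1/12)](1/2 − y) + [V_x^2 + Δ_xV_x^2·x + Δ_xxV_x^2·(x² − 1/12)](1/2 + y) + a_yy(1 − 4y²) + a_yyy·y(1 − 4y²) + a_xyy·x(1 − 4y²) and V^y(x,y) = [V_y^1 + Δ_yV_y^1·y + Δ_yyV_y^1·(y² − 1/12)](1/2 − x) + [V_y^2 + Δ_yV_y^2·y + Δ_yyV_y^2·(y² − 1/12)](1/2 + x) + b_xx(1 − 4x²) + b_xxx·x(1 − 4x²) + b_xxy·y(1 − 4x²), with a_yy = (Δ_yR^z + Δ_yV_y^1 − Δ_yV_y^2)/8 and b_xx = (−Δ_xR^z + Δ_xV_x^1 − Δ_xV_x^2)/8 (the remaining interior coefficients a_yyy, a_xyy, b_xxx, b_xxy arbitrary). Then the zone averages over the unit square are ∫_{[-1/2,1/2]²} V^x dx dy = (V_x^1 + V_x^2)/2 + (Δ_yV_y^1 − Δ_yV_y^2 + Δ_yR^z)/12 and ∫_{[-1/2,1/2]²} V^y dx dy = (V_y^1 + V_y^2)/2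 + (Δ_xV_x^1 − Δ_xV_x^2 − Δ_xR^z)/12. -/

import Mathlib

/-- The x-component of the third-order 2D reconstruction (eqn. 2.10). -/
noncomputable def V3x (vx1 dx1 dxx1 vx2 dx2 dxx2 ayy ayyy axyy x y : ℝ) : ℝ :=
  (vx1 + dx1 * x + dxx1 * (x ^ 2 - 1 / 12)) * (1 / 2 - y) +
    (vx2 + dx2 * x + dxx2 * (x ^ 2 - 1 / 12)) * (1 / 2 + y) +
    ayy * (1 - 4 * y ^ 2) + ayyy * y * (1 - 4 * y ^ 2) + axyy * x * (1 - 4 * y ^ 2)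

/-- The y-component of the third-order 2D reconstruction (eqn. 2.10). -/
noncomputable def V3y (vy1 dy1 dyy1 vy2 dy2 dyy2 bxx bxxx bxxy x y : ℝ) : ℝ :=
  (vy1 + dy1 * y + dyy1 * (y ^ 2 - 1 / 12)) * (1 / 2 - x) +
    (vy2 + dy2 * y + dyy2 * (y ^ 2 - 1 / 12)) * (1 / 2 + x) +
    bxx * (1 - 4 * x ^ 2) + bxxx * x * (1 - 4 * x ^ 2) + bxxy * y * (1 - 4 * x ^ 2)

/-!
Each component is a cubic polynomial along every line parallel to an axis, so Simpson's rule
integrates it exactly. In the direction transverse to its edges, the factor `1 - 4 * y ^ 2` vanishes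
at both endpoints, so the interior coefficients enter only through the midpoint value, with weight
`2 / 3`. Along the edges, the profiles `x` and `x ^ 2 - 1 / 12` have mean zero, leaving only the
edge averages and `a_yy`. Exchanging the two coordinates turns one component into the other.
-/

theorem intervalIntegral_swap_of_continuous {E : Type*} [NormedAddCommGroup E] [NormedSpace ℝ E]
    {f : ℝ → ℝ → E} (hf : Continuous f.uncurry) (a b c d : ℝ) :
    ∫ x in a..b, ∫ y in c..d, f x y = ∫ y in c..d, ∫ x in a..b, f x y := by
  have integrableOn_uIcc :
      MeasureTheory.IntegrableOn f.uncurry (Set.uIcc a b ×ˢ Set.uIcc c d) :=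
    hf.continuousOn.integrableOn_compact (isCompact_uIcc.prod isCompact_uIcc)
  exact MeasureTheory.intervalIntegral_intervalIntegral_swap <|
    integrableOn_uIcc.mono_set <| Set.prod_mono Set.uIoc_subset_uIcc Set.uIoc_subset_uIcc

section

open Polynomial

theorem integral_eval_eq_simpson {p : ℝ[X]} (hp : p.natDegree ≤ 3) (a b : ℝ) :
    ∫ t in a..b, p.eval t =
      (b - a) / 6 * (p.eval a + 4 * p.eval ((a + b) / 2) + p.eval b) := by
  have eval_eq (t : ℝ) : p.eval t = ∑ i ∈ Finset.range 4, p.coeff i * t ^ i :=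
    eval_eq_sum_range' (Nat.lt_succ_of_le hp) t
  have integral_eq : ∫ t in a..b, p.eval t =
      ∑ i ∈ Finset.range 4, p.coeff i * ((b ^ (i + 1) - a ^ (i + 1)) / (i + 1)) := by
    simp_rw [eval_eq]
    rw [intervalIntegral.integral_finsetSum
      fun i _ => (by fun_prop : Continuous _).intervalIntegrable a b]
    simp_rw [intervalIntegral.integral_const_mul, integral_pow]
  rw [integral_eq]
  simp only [eval_eq, Finset.sum_range_succ, Finset.sum_range_zero]
  push_cast
  ring

variable (v₁ d₁ dd₁ v₂ d₂ dd₂ : ℝ)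

theorem integral_V3x_right (ayy ayyy axyy x : ℝ) :
    ∫ y in (-(1:ℝ)/2)..(1/2), V3x v₁ d₁ dd₁ v₂ d₂ dd₂ ayy ayyy axyy x y =
      ((v₁ + d₁ * x + dd₁ * (x ^ 2 - 1 / 12)) +
        (v₂ + d₂ * x + dd₂ * (x ^ 2 - 1 / 12))) / 2 + 2 / 3 * (ayy + axyy * x) := by
  let p : ℝ[X] :=
    C (v₁ + d₁ * x + dd₁ * (x ^ 2 - 1 / 12)) * (C (1 / 2) - X) +
      C (v₂ + d₂ * x + dd₂ * (x ^ 2 - 1 / 12)) * (C (1 / 2) + X) +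
      (C (ayy + axyy * x) + C ayyy * X) * (1 - C 4 * X ^ 2)
  have natDegree_p : p.natDegree ≤ 3 := by unfold p; compute_degree
  have eval_p (y : ℝ) : V3x v₁ d₁ dd₁ v₂ d₂ dd₂ ayy ayyy axyy x y = p.eval y := by
    simp only [V3x, p, eval_add, eval_sub, eval_mul, eval_pow, eval_C, eval_X, eval_one]
    ring
  simp_rw [eval_p]
  rw [integral_eval_eq_simpson natDegree_p]
  simp only [← eval_p, V3x]
  ring

theorem integral_integral_V3x (ayy ayyy axyy : ℝ) :
    ∫ x in (-(1:ℝ)/2)..(1/2), ∫ y in (-(1:ℝ)/2)..(1/2),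
        V3x v₁ d₁ dd₁ v₂ d₂ dd₂ ayy ayyy axyy x y =
      (v₁ + v₂) / 2 + 2 / 3 * ayy := by
  let p : ℝ[X] :=
    C (1 / 2) * (C v₁ + C d₁ * X + C dd₁ * (X ^ 2 - C (1 / 12)) +
      (C v₂ + C d₂ * X + C dd₂ * (X ^ 2 - C (1 / 12)))) + C (2 / 3) * (C ayy + C axyy * X)
  have natDegree_p : p.natDegree ≤ 3 := by unfold p; compute_degree!
  have eval_p (x : ℝ) :
      ∫ y in (-(1:ℝ)/2)..(1/2), V3x v₁ d₁ dd₁ v₂ d₂ dd₂ ayy ayyy axyy x y = p.eval x := by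
    rw [integral_V3x_right]
    simp only [p, eval_add, eval_sub, eval_mul, eval_pow, eval_C, eval_X]
    ring
  simp_rw [eval_p]
  rw [integral_eval_eq_simpson natDegree_p]
  simp only [← eval_p, integral_V3x_right]
  ring

theorem V3y_eq_V3x_swap (bxx bxxx bxxy x y : ℝ) :
    V3y v₁ d₁ dd₁ v₂ d₂ dd₂ bxx bxxx bxxy x y = V3x v₁ d₁ dd₁ v₂ d₂ dd₂ bxx bxxx bxxy y x :=
  rfl

theorem integral_integral_V3y (bxx bxxx bxxy : ℝ) :
    ∫ x in (-(1:ℝ)/2)..(1/2), ∫ y in (-(1:ℝ)/2)..(1/2),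
        V3y v₁ d₁ dd₁ v₂ d₂ dd₂ bxx bxxx bxxy x y =
      (v₁ + v₂) / 2 + 2 / 3 * bxx := by
  have continuous_V3y : Continuous (V3y v₁ d₁ dd₁ v₂ d₂ dd₂ bxx bxxx bxxy).uncurry := by
    unfold V3y Function.uncurry
    fun_prop
  rw [intervalIntegral_swap_of_continuous continuous_V3y]
  simp_rw [V3y_eq_V3x_swap]
  exact integral_integral_V3x ..

end

/-- zone averages of the third-order curl-preserving
reconstruction over the unit square (eqn. 2.19); `a_yy` and `b_xx` are fixed by
the constraint while the remaining interior coefficients are arbitrary. -/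
theorem stmt_5
    (vx1 dx1 dxx1 vx2 dx2 dxx2 vy1 dy1 dyy1 vy2 dy2 dyy2
      dxRz dyRz ayy ayyy axyy bxx bxxx bxxy : ℝ)
    (hayy : ayy = (dyRz + dy1 - dy2) / 8)
    (hbxx : bxx = (-dxRz + dx1 - dx2) / 8) :
    (∫ x in (-(1:ℝ)/2)..(1/2), ∫ y in (-(1:ℝ)/2)..(1/2),
        V3x vx1 dx1 dxx1 vx2 dx2 dxx2 ayy ayyy axyy x y) =
      (vx1 + vx2) / 2 + (dy1 - dy2 + dyRz) / 12 ∧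
    (∫ x in (-(1:ℝ)/2)..(1/2), ∫ y in (-(1:ℝ)/2)..(1/2),
        V3y vy1 dy1 dyy1 vy2 dy2 dyy2 bxx bxxx bxxy x y) =
      (vy1 + vy2) / 2 + (dx1 - dx2 - dxRz) / 12 := by
  constructor
  · rw [integral_integral_V3x, hayy]
    ring
  · rw [integral_integral_V3y, hbxx]
    ring
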